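/- Let N ≥ 1 and consider the ℤ_N toric code anyon theory on A = ZMod N × ZMod N with braiding B_TC. For every k ∈ ZMod N, the diagonal anyon (k,k) braids trivially with all diagonal anyons (i.e. B_TC((k,k),(l,l)) = 1 for all l ∈ ZMod N) if and only if k = 0, or N is even and k is the image of N/2 in ZMod N. In particular, the diagonal subtheory ℤ_N^(1) (generated by em) contains a nonzero transparent anyon if and only if N is even, i.e. it is modular if and only if N is odd. -/

import Mathlib

/-- The braiding associated to an exchange-statistics function `θ`:
`B(a,b) = θ(a+b) · θ(a)⁻¹ · θ(b)⁻¹`. -/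
noncomputable def braiding {A : Type*} [AddCommGroup A] (θ : A → ℂ) (a b : A) : ℂ :=
  θ (a + b) * (θ a)⁻¹ * (θ b)⁻¹

/-- An exchange-statistics function (Abelian anyon theory) on an additive abelian
group `A`: a unimodular map `θ : A → ℂ` with `θ 0 = 1`, `θ (-a) = θ a`, whose
associated braiding is biadditive. -/
structure IsExchangeStats {A : Type*} [AddCommGroup A] (θ : A → ℂ) : Prop where
  abs_eq_one : ∀ a, ‖θ a‖ = 1
  map_zero : θ 0 = 1
  map_neg : ∀ a, θ (-a) = θ a
  braiding_add_left : ∀ a a' b, braiding θ (a + a') b = braiding θ a b * braiding θ a' b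
  braiding_add_right : ∀ a b b', braiding θ a (b + b') = braiding θ a b * braiding θ a b'

/-- A Lagrangian subgroup of an Abelian anyon theory `(A, θ)`. -/
def IsLagrangian {A : Type*} [AddCommGroup A] (θ : A → ℂ) (L : AddSubgroup A) : Prop :=
  (∀ c ∈ L, θ c = 1) ∧ (∀ c ∈ L, ∀ c' ∈ L, braiding θ c c' = 1) ∧
  (∀ a : A, a ∉ L → ∃ c ∈ L, braiding θ a c ≠ 1)

/-- The exchange statistics of the `ℤ_N` toric code anyon theory on
`ZMod N × ZMod N`: `θ_TC(e,m) = exp(2πi·e·m/N)`. -/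
noncomputable def thetaTC (N : ℕ) (a : ZMod N × ZMod N) : ℂ :=
  Complex.exp (2 * Real.pi * Complex.I * (a.1.val : ℂ) * (a.2.val : ℂ) / (N : ℂ))

theorem thetaTC_eq (N : ℕ) [NeZero N] (a : ZMod N × ZMod N) :
    thetaTC N a = ZMod.stdAddChar (a.1 * a.2) := by
  have h : a.1 * a.2 = (((a.1.val * a.2.val : ℕ) : ℤ) : ZMod N) := by
    push_cast
    simp
  rw [h, ZMod.stdAddChar_coe, thetaTC]
  push_cast
  congr 1
  ring

theorem braiding_diag (N : ℕ) [NeZero N] (k l : ZMod N) :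
    braiding (thetaTC N) (k, k) (l, l) = ZMod.stdAddChar (2 * k * l) := by
  simp only [braiding, thetaTC_eq, Prod.mk_add_mk, ← AddChar.map_neg_eq_inv,
    ← AddChar.map_add_eq_mul]
  congr 1
  ring

/-- A diagonal anyon `(k,k)` of the `ℤ_N` toric code braids trivially with all
diagonal anyons iff `k = 0`, or `N` is even and `k = N/2`.  Hence the `ℤ_N^(1)`
subtheory has a nonzero transparent anyon iff `N` is even. -/
theorem diag_transparent_iff (N : ℕ) [NeZero N] (k : ZMod N) :
    (∀ l : ZMod N, braiding (thetaTC N) (k, k) (l, l) = 1) ↔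
      (k = 0 ∨ (Even N ∧ k = ((N / 2 : ℕ) : ZMod N))) := by
  have h1 : (∀ l : ZMod N, braiding (thetaTC N) (k, k) (l, l) = 1) ↔ 2 * k = 0 := by
    simp only [braiding_diag]
    constructor
    · intro h
      have h2 := h 1
      rw [mul_one, ← AddChar.map_zero_eq_one (ZMod.stdAddChar (N := N))] at h2
      exact ZMod.injective_stdAddChar h2
    · intro h l
      simp [h]
  rw [h1]
  constructor
  · intro h
    have hk : ((k.val : ℕ) : ZMod N) = k := ZMod.natCast_zmod_val k
    have hlt := ZMod.val_lt k
    have hd : N ∣ 2 * k.val := by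
      rw [← ZMod.natCast_eq_zero_iff]
      push_cast
      rw [hk, h]
    obtain ⟨c, hc⟩ := hd
    have hc2 : c < 2 := by
      by_contra hcon
      have : N * 2 ≤ N * c := Nat.mul_le_mul_left N (by omega)
      omega
    interval_cases c
    · left
      rw [← hk, show k.val = 0 by omega]
      simp
    · right
      refine ⟨⟨k.val, by omega⟩, ?_⟩
      rw [show N / 2 = k.val by omega, hk]
  · rintro (h | ⟨he, h⟩)
    · simp [h]
    · rw [h]
      have := Nat.two_mul_div_two_of_even he
      have h3 : ((2 * (N / 2) : ℕ) : ZMod N) = 0 := by rw [this]; simp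
      exact_mod_cast h3
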